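/- arXiv:math/0609220 — 2 statements merged into one kernel-verified Lean document; each statement's English description precedes it below -/
import Mathlib

section
/- Let p₀ : E₀ → B and p₁ : E₁ → B be continuous maps and let φ : E₀ → E₁ be a map over B which exhibits E₀ as a strong deformation retract of E₁ over B, i.e. there is r : E₁ → E₀ over B with r∘φ = id_{E₀} and a homotopy over B from φ∘r to id_{E₁} that is stationary on φ(E₀). Let M(φ) be the ordinary mapping cylinder: the quotient of the disjoint union (E₀ × [0,1]) ⊔ E₁ by the relation (e,1) ∼ φ(e), with the continuous map q : M(φ) → [0,1] × B induced by (e,t) ↦ (t, p₀(e)) and e' ↦ (1, p₁(e')). Then M(φ) serves as a mapping cylinder for φ over [0,1] × B: the canonical maps E₀ → q⁻¹({0} × B) (e ↦ [e,0]) and E₁ → q⁻¹({1} × B) (e' ↦ [e']) are homeomorphisms onto these subspaces, and there is a continuous map ψ : M(φ) → [0,1] × E₁ over [0,1] × B which is a fiber homotopy equivalence over [0,1] × B, with ψ([e,0]) = (0, φ(e)) for e ∈ E₀ and ψ([e']) = (1, e') for e' ∈ E₁. -/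
/-!
The cylinder retracts onto each end: `[e, t] ↦ e`, `[e'] ↦ r e'` is a left inverse of `Cyl.incl₀`,
and `[e, t] ↦ φ e`, `[e'] ↦ e'` is a left inverse of `Cyl.incl₁`, so both ends are embedded.

The equivalence is `ψ [e, t] = (t, φ e)`, `ψ [e'] = (1, e')`, with homotopy inverse
`χ (t, e') = [r e', t]`. Then `ψ (χ (t, e')) = (t, φ (r e'))`, which `D` deforms to the identity,
while `χ ∘ ψ` fixes every `[e, t]` and sends `[e']` to `[φ (r e')]`. The homotopy from `χ ∘ ψ` to
the identity fixes `[e, t]` and moves `[e']` through `[D (s, e')]`; it respects the gluing because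
`D` is stationary on the image of `φ`. It is continuous because the product of a quotient map
with the locally compact space `[0,1]` is again a quotient map (`Cyl.continuous_of_prod`).
-/

/-!
Statement 7: if `φ : E₀ → E₁` over `B` exhibits `E₀` as a strong deformation retract of
`E₁` over `B`, then the ordinary mapping cylinder `M(φ)`, mapped to `[0,1] × B` in the
obvious way, serves as a mapping cylinder for `φ` over `[0,1] × B`: its ends are copies
of `E₀` and `E₁`, and there is a characterizing fiber homotopy equivalence
`ψ : M(φ) → [0,1] × E₁` over `[0,1] × B` restricting to `φ` at `0` and the identity at `1`.
-/

universe u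

variable {E₀ E₁ B : Type u}
variable [TopologicalSpace E₀] [TopologicalSpace E₁] [TopologicalSpace B]

/-- `φ : X → Y` is a fiber homotopy equivalence over `B`. -/
def IsFiberHomotopyEquivOver {X Y B : Type u}
    [TopologicalSpace X] [TopologicalSpace Y] [TopologicalSpace B]
    (pX : X → B) (pY : Y → B) (φ : X → Y) : Prop :=
  Continuous φ ∧ (∀ x, pY (φ x) = pX x) ∧
    ∃ ψ : Y → X, Continuous ψ ∧ (∀ y, pX (ψ y) = pY y) ∧
      (∃ H : unitInterval × X → X, Continuous H ∧ (∀ x, H (0, x) = ψ (φ x)) ∧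
        (∀ x, H (1, x) = x) ∧ ∀ t x, pX (H (t, x)) = pX x) ∧
      (∃ K : unitInterval × Y → Y, Continuous K ∧ (∀ y, K (0, y) = φ (ψ y)) ∧
        (∀ y, K (1, y) = y) ∧ ∀ t y, pY (K (t, y)) = pY y)

/-- The gluing relation of the mapping cylinder: `(e, 1) ∼ φ(e)`. -/
inductive CylRel (φ : E₀ → E₁) : (E₀ × unitInterval) ⊕ E₁ → (E₀ × unitInterval) ⊕ E₁ → Prop
  | glue (e : E₀) : CylRel φ (Sum.inl (e, 1)) (Sum.inr (φ e))

/-- The ordinary mapping cylinder `M(φ)`: the quotient of `(E₀ × [0,1]) ⊔ E₁` by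
`(e, 1) ∼ φ(e)`, with the quotient topology. -/
def Cyl (φ : E₀ → E₁) : Type u :=
  Quot (CylRel φ)

instance (φ : E₀ → E₁) : TopologicalSpace (Cyl φ) :=
  inferInstanceAs (TopologicalSpace (Quot (CylRel φ)))

/-- The canonical projection `M(φ) → [0,1] × B`, induced by `(e, t) ↦ (t, p₀ e)` and
`e' ↦ (1, p₁ e')`. -/
def Cyl.proj (p₀ : E₀ → B) (p₁ : E₁ → B) (φ : E₀ → E₁) (hφ : ∀ e, p₁ (φ e) = p₀ e) :
    Cyl φ → unitInterval × B :=
  Quot.lift (Sum.elim (fun z => (z.2, p₀ z.1)) (fun e' => ((1 : unitInterval), p₁ e')))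
    (by rintro _ _ ⟨e⟩; simp [hφ])

/-- The canonical map `E₀ → M(φ)`, `e ↦ [(e, 0)]`. -/
def Cyl.incl₀ (φ : E₀ → E₁) (e : E₀) : Cyl φ :=
  Quot.mk _ (Sum.inl (e, 0))

/-- The canonical map `E₁ → M(φ)`, `e' ↦ [e']`. -/
def Cyl.incl₁ (φ : E₀ → E₁) (e' : E₁) : Cyl φ :=
  Quot.mk _ (Sum.inr e')

namespace Cyl

/-- The map out of the mapping cylinder induced by a map on `E₀ × [0,1]` and a map on `E₁` which
agree along the gluing. -/
def desc {Z : Type*} {φ : E₀ → E₁} (f : E₀ × unitInterval → Z) (g : E₁ → Z)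
    (h : ∀ e, f (e, 1) = g (φ e)) : Cyl φ → Z :=
  Quot.lift (Sum.elim f g) (by rintro _ _ ⟨e⟩; exact h e)

theorem isQuotientMap_mk (φ : E₀ → E₁) :
    Topology.IsQuotientMap (Quot.mk (CylRel φ) : _ → Cyl φ) :=
  isQuotientMap_quot_mk

theorem continuous_desc {Z : Type*} [TopologicalSpace Z] {φ : E₀ → E₁}
    {f : E₀ × unitInterval → Z} {g : E₁ → Z} (h : ∀ e, f (e, 1) = g (φ e))
    (hf : Continuous f) (hg : Continuous g) : Continuous (desc f g h : Cyl φ → Z) :=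
  continuous_quot_lift _ (hf.sumElim hg)

/-- A map out of `[0,1] × M(φ)` is continuous if it is so on `[0,1] × (E₀ × [0,1])` and on
`[0,1] × E₁`. Local compactness of `[0,1]` is what makes the product of `[0,1]` with the defining
quotient map a quotient map. -/
theorem continuous_of_prod {Z : Type*} [TopologicalSpace Z] {φ : E₀ → E₁}
    {H : unitInterval × Cyl φ → Z}
    (hf : Continuous fun z : unitInterval × (E₀ × unitInterval) =>
      H (z.1, Quot.mk _ (Sum.inl z.2)))
    (hg : Continuous fun z : unitInterval × E₁ => H (z.1, Quot.mk _ (Sum.inr z.2))) :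
    Continuous H := by
  refine (isQuotientMap_mk φ).continuous_lift_prod_right ?_
  rw [← Homeomorph.prodSumDistrib.symm.comp_continuous_iff']
  exact continuous_sum_dom.2 ⟨hf, hg⟩

end Cyl

/-- If `φ : E₀ → E₁` over `B` exhibits `E₀` as a strong deformation retract of `E₁`
over `B`, then the ordinary mapping cylinder `M(φ)` serves as a mapping cylinder for `φ`
over `[0,1] × B`. -/
theorem ordinary_mapping_cylinder_of_sdr
    (p₀ : E₀ → B) (p₁ : E₁ → B) (hp₀ : Continuous p₀) (hp₁ : Continuous p₁)
    (φ : E₀ → E₁) (hφc : Continuous φ) (hφ : ∀ e, p₁ (φ e) = p₀ e)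
    -- `φ` exhibits `E₀` as a strong deformation retract of `E₁` over `B`:
    (r : E₁ → E₀) (hrc : Continuous r) (hr : ∀ e', p₀ (r e') = p₁ e')
    (hrφ : ∀ e, r (φ e) = e)
    (D : unitInterval × E₁ → E₁) (hDc : Continuous D)
    (hD0 : ∀ e', D (0, e') = φ (r e')) (hD1 : ∀ e', D (1, e') = e')
    (hDover : ∀ t e', p₁ (D (t, e')) = p₁ e')
    (hDstat : ∀ t e, D (t, φ e) = φ e) :
    -- the ends of `M(φ)` are copies of `E₀` and `E₁`:
    Continuous (Cyl.proj p₀ p₁ φ hφ) ∧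
    Continuous (Cyl.incl₀ φ) ∧ Continuous (Cyl.incl₁ φ) ∧
    (∀ e, Cyl.proj p₀ p₁ φ hφ (Cyl.incl₀ φ e) = (0, p₀ e)) ∧
    (∀ e', Cyl.proj p₀ p₁ φ hφ (Cyl.incl₁ φ e') = (1, p₁ e')) ∧
    Topology.IsEmbedding (Cyl.incl₀ φ) ∧
    Set.range (Cyl.incl₀ φ) =
      Cyl.proj p₀ p₁ φ hφ ⁻¹' (({0} : Set unitInterval) ×ˢ (Set.univ : Set B)) ∧
    Topology.IsEmbedding (Cyl.incl₁ φ) ∧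
    Set.range (Cyl.incl₁ φ) =
      Cyl.proj p₀ p₁ φ hφ ⁻¹' (({1} : Set unitInterval) ×ˢ (Set.univ : Set B)) ∧
    -- the characterizing fiber homotopy equivalence `ψ : M(φ) → [0,1] × E₁`:
    ∃ ψ : Cyl φ → unitInterval × E₁,
      IsFiberHomotopyEquivOver (Cyl.proj p₀ p₁ φ hφ) (fun z => (z.1, p₁ z.2)) ψ ∧
      (∀ e, ψ (Cyl.incl₀ φ e) = (0, φ e)) ∧
      (∀ e', ψ (Cyl.incl₁ φ e') = (1, e')) := by
  have hmk := (Cyl.isQuotientMap_mk φ).continuous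
  have hinl : Continuous fun z : E₀ × unitInterval => (Quot.mk _ (Sum.inl z) : Cyl φ) :=
    hmk.comp continuous_inl
  have hinr : Continuous (Cyl.incl₁ φ) := hmk.comp continuous_inr
  have hincl₀ : Continuous (Cyl.incl₀ φ) := hinl.comp (by fun_prop : Continuous fun e : E₀ =>
    (e, (0 : unitInterval)))
  have hglue : ∀ e, (Quot.mk _ (Sum.inl (e, 1)) : Cyl φ) = Cyl.incl₁ φ (φ e) :=
    fun e => Quot.sound (CylRel.glue e)
  refine ⟨Cyl.continuous_desc (fun e => by simp [hφ]) (by fun_prop) (by fun_prop), hincl₀, hinr,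
    fun _ => rfl, fun _ => rfl, ?_, ?_, ?_, ?_, ?_⟩
  · exact Function.LeftInverse.isEmbedding
      (f := Cyl.desc (fun z => z.1) r fun e => (hrφ e).symm) (fun _ => rfl)
      (Cyl.continuous_desc _ continuous_fst hrc) hincl₀
  · ext x
    constructor
    · rintro ⟨e, rfl⟩
      exact ⟨rfl, trivial⟩
    · rintro ⟨hx, -⟩
      obtain ⟨⟨e, t⟩ | e', rfl⟩ := Quot.exists_rep x
      · obtain rfl : t = 0 := hx
        exact ⟨e, rfl⟩
      · exact absurd (show (1 : unitInterval) = 0 from hx) one_ne_zero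
  · exact Function.LeftInverse.isEmbedding
      (f := Cyl.desc (fun z => φ z.1) id fun _ => rfl) (fun _ => rfl)
      (Cyl.continuous_desc _ (by fun_prop) continuous_id) hinr
  · ext x
    constructor
    · rintro ⟨e', rfl⟩
      exact ⟨rfl, trivial⟩
    · rintro ⟨hx, -⟩
      obtain ⟨⟨e, t⟩ | e', rfl⟩ := Quot.exists_rep x
      · obtain rfl : t = 1 := hx
        exact ⟨φ e, (hglue e).symm⟩
      · exact ⟨e', rfl⟩
  · refine ⟨Cyl.desc (fun z => (z.2, φ z.1)) (fun e' => (1, e')) fun _ => rfl,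
      ⟨Cyl.continuous_desc _ (by fun_prop) (by fun_prop), ?_,
        fun z => Quot.mk _ (Sum.inl (r z.2, z.1)), ?_, ?_, ?_, ?_⟩, fun _ => rfl, fun _ => rfl⟩
    · rintro ⟨⟨e, t⟩ | e'⟩
      · exact Prod.ext rfl (hφ e)
      · rfl
    · exact hinl.comp (by fun_prop : Continuous fun z : unitInterval × E₁ => (r z.2, z.1))
    · exact fun z => Prod.ext rfl (hr z.2)
    · refine ⟨fun z => Cyl.desc (fun y => Quot.mk _ (Sum.inl y))
        (fun e' => Cyl.incl₁ φ (D (z.1, e')))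
        (fun e => by rw [hDstat]; exact hglue e) z.2, ?_, ?_, ?_, ?_⟩
      · exact Cyl.continuous_of_prod (hinl.comp continuous_snd) (hinr.comp hDc)
      · rintro ⟨⟨e, t⟩ | e'⟩
        · change (Quot.mk _ (Sum.inl (e, t)) : Cyl φ) = Quot.mk _ (Sum.inl (r (φ e), t))
          rw [hrφ]
        · change Cyl.incl₁ φ (D (0, e')) = Quot.mk _ (Sum.inl (r e', 1))
          rw [hD0, hglue]
      · rintro ⟨⟨e, t⟩ | e'⟩
        · rfl
        · exact congrArg (Cyl.incl₁ φ) (hD1 e')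
      · rintro s ⟨⟨e, t⟩ | e'⟩
        · rfl
        · exact Prod.ext rfl (hDover s e')
    · refine ⟨fun z => (z.2.1, D (z.1, z.2.2)), by fun_prop, ?_, ?_, ?_⟩
      · exact fun z => Prod.ext rfl (hD0 z.2)
      · exact fun z => Prod.ext rfl (hD1 z.2)
      · exact fun s z => Prod.ext rfl (hDover s z.2)
end

section
/- Let p : E → B and p' : E' → B be continuous maps, φ : E → E' a map over B, and {U_α} a numerable open cover of B such that for each α the restriction φ|p⁻¹(U_α) : p⁻¹(U_α) → p'⁻¹(U_α) is a fiber homotopy equivalence over U_α. Then φ is a fiber homotopy equivalence over B. -/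
/-!
The proof follows Dold. A map `φ : E → E'` over `B` is replaced by its fiberwise mapping path space
`VertPath p p' φ`, the space of pairs `(e, w)` of a point of `E` and a vertical path `w` in `E'`
starting at `φ e`, with its endpoint projection to `E'`. A section of this projection is the same
as a right inverse of `φ` up to homotopy over `B`.

If `φ` is a fiber homotopy equivalence, the endpoint projection is shrinkable: it has a section `s`
such that `s ∘ endpt` is homotopic to the identity over `E'` (`VertPath.exists_shrinking`). A
homotopy over `B` comes directly from the inverse of `φ`; `VertPath.shrink_over_endpt` turns it into
a homotopy over `E'` by transporting vertical paths along the track of their endpoints.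

A map which is shrinkable over each member of a numerable cover has a section
(`exists_section_of_locally_shrinkable`): for a linear order on the index set, one passes through
the finitely many members of positive weight at a point and, at each of them, pushes the point
constructed so far towards the local section, for a time prescribed by the weights.

Hence `φ` has a right inverse `ψ` up to homotopy over `B` (`exists_rightInverse`). Now `ψ` is again
locally a fiber homotopy equivalence, so it has a right inverse too, which must be homotopic to
`φ`; therefore `ψ` is a two-sided inverse.
-/

/-!
Statement 10: a map `φ` over `B` whose restriction over each member of a numerable open
cover of `B` is a fiber homotopy equivalence is itself a fiber homotopy equivalence
over `B`.
-/

universe u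

open Set Filter Topology unitInterval

/-! ### Gluing local sections -/

section Gluing

variable {ι X R : Type*}

/-- The value at `x` of a section glued from local sections `s a`, entering the members of the
list `a :: l` from the tail to the head. Where the weight `f a` dominates the total weight of the
tail `l`, the section `s a` is used; elsewhere the point built from `l` is pushed towards `s a`
along the contraction `h a`, for a time which reaches `1` where both weights agree and is `0`
where `f a` vanishes. The point `r₀` is a placeholder for the points of total weight `0`. -/
noncomputable def glueSections (f : ι → X → ℝ) (s : ι → X → R) (h : ι → I × R → R) (r₀ : R) :
    List ι → X → R
  | [], _ => r₀
  | a :: l, x =>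
    if (l.map (f · x)).sum < f a x then s a x
    else h a (projIcc 0 1 zero_le_one (2 * f a x / ((l.map (f · x)).sum + f a x)),
      glueSections f s h r₀ l x)

variable {f : ι → X → ℝ} {s : ι → X → R} {h : ι → I × R → R} {r₀ : R}

lemma weight_nonneg (hf : ∀ a x, 0 ≤ f a x) (l : List ι) (x : X) : 0 ≤ (l.map (f · x)).sum :=
  List.sum_nonneg (by simpa using fun a _ => hf a x)

/-- Members of weight `0` at `x` do not contribute to the glued section. -/
lemma glueSections_cons_of_eq_zero (hf : ∀ a x, 0 ≤ f a x) (h0 : ∀ a r, h a (0, r) = r)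
    {a : ι} {l : List ι} {x : X} (ha : f a x = 0) :
    glueSections f s h r₀ (a :: l) x = glueSections f s h r₀ l x := by
  have := weight_nonneg hf l x
  simp [glueSections, ha, not_lt.2 this, h0]

lemma glueSections_filter (hf : ∀ a x, 0 ≤ f a x) (h0 : ∀ a r, h a (0, r) = r) (x : X)
    (P : ι → Bool) (l : List ι) (hP : ∀ a ∈ l, P a = false → f a x = 0) :
    ((l.filter P).map (f · x)).sum = (l.map (f · x)).sum ∧
      glueSections f s h r₀ (l.filter P) x = glueSections f s h r₀ l x := by
  induction l with
  | nil => simp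
  | cons a l ih =>
    obtain ⟨ih1, ih2⟩ := ih fun b hb => hP b (List.mem_cons_of_mem _ hb)
    cases hPa : P a with
    | false =>
      have ha := hP a List.mem_cons_self hPa
      rw [List.filter_cons_of_neg (by simp [hPa]), glueSections_cons_of_eq_zero hf h0 ha]
      simp [ih1, ih2, ha]
    | true =>
      rw [List.filter_cons_of_pos hPa]
      simp only [List.map_cons, List.sum_cons, glueSections, ih1, ih2, and_self]

variable [TopologicalSpace X] [TopologicalSpace R]

lemma continuous_weight (hfc : ∀ a, Continuous (f a)) (l : List ι) :
    Continuous fun x => (l.map (f · x)).sum :=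
  continuous_list_sum l fun a _ => hfc a

/-- Along a finite list, the glued section is a continuous section wherever the total weight of
the list is positive. -/
lemma glueSections_isSection (q : R → X) (V : ι → Set X) (hV : ∀ a, IsOpen (V a))
    (hq : Continuous q) (hf : ∀ a x, 0 ≤ f a x) (hfc : ∀ a, Continuous (f a))
    (hfV : ∀ a, tsupport (f a) ⊆ V a)
    (hs : ∀ a, ContinuousOn (s a) (V a)) (hqs : ∀ a, ∀ x ∈ V a, q (s a x) = x)
    (hc : ∀ a, ContinuousOn (h a) {z | q z.2 ∈ V a}) (h0 : ∀ a r, h a (0, r) = r)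
    (h1 : ∀ a r, q r ∈ V a → h a (1, r) = s a (q r))
    (hqh : ∀ a t r, q (h a (t, r)) = q r) (l : List ι) (x : X)
    (hx : 0 < (l.map (f · x)).sum) :
    ContinuousAt (glueSections f s h r₀ l) x ∧ q (glueSections f s h r₀ l x) = x := by
  induction l generalizing x with
  | nil => simp at hx
  | cons a l ih =>
    have hmem : ∀ y, 0 < f a y → y ∈ V a := fun y hy => hfV a (subset_tsupport _ hy.ne')
    have hSc := continuous_weight hfc l
    simp only [List.map_cons, List.sum_cons] at hx
    by_cases hxa : x ∈ tsupport (f a)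
    · have hxV := hfV a hxa
      by_cases hlt : (l.map (f · x)).sum < f a x
      · have hev : glueSections f s h r₀ (a :: l) =ᶠ[𝓝 x] s a := by
          filter_upwards [hSc.continuousAt.eventually_lt (hfc a).continuousAt hlt] with y hy
          simp [glueSections, hy]
        exact ⟨((hs a).continuousAt ((hV a).mem_nhds hxV)).congr hev.symm,
          hev.eq_of_nhds ▸ hqs a x hxV⟩
      · have hpos : 0 < (l.map (f · x)).sum := by
          have := weight_nonneg hf l x
          have := hf a x
          by_contra hneg
          linarith
        obtain ⟨hcx, hqx⟩ := ih x hpos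
        refine ⟨?_, by simp only [glueSections, if_neg hlt, hqh, hqx]⟩
        -- At the points where the section `s a` takes over, the contraction has reached time `1`.
        have hev : (fun y => h a (projIcc 0 1 zero_le_one
              (2 * f a y / ((l.map (f · y)).sum + f a y)), glueSections f s h r₀ l y))
            =ᶠ[𝓝 x] glueSections f s h r₀ (a :: l) := by
          filter_upwards [hSc.continuousAt.eventually (lt_mem_nhds hpos)] with y hy
          by_cases hy' : (l.map (f · y)).sum < f a y
          · have hqy := (ih y hy).2
            have h1' : (1 : ℝ) ≤ 2 * f a y / ((l.map (f · y)).sum + f a y) := by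
              rw [le_div_iff₀ (by linarith)]
              linarith
            rw [projIcc_of_right_le _ h1']
            have := h1 a (glueSections f s h r₀ l y) (by rw [hqy]; exact hmem y (hy.trans hy'))
            simp only [glueSections, if_pos hy']
            rw [hqy] at this
            exact this
          · simp only [glueSections, if_neg hy']
        refine ContinuousAt.congr ?_ hev
        have ht : ContinuousAt (fun y => projIcc (0 : ℝ) 1 zero_le_one
            (2 * f a y / ((l.map (f · y)).sum + f a y))) x := by
          refine continuous_projIcc.continuousAt.comp (ContinuousAt.div ?_ ?_ ?_)
          · exact (continuous_const.mul (hfc a)).continuousAt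
          · exact (hSc.add (hfc a)).continuousAt
          · linarith
        have hopen : IsOpen {z : I × R | q z.2 ∈ V a} := (hV a).preimage (hq.comp continuous_snd)
        refine ContinuousAt.comp (f := fun y => ((projIcc (0 : ℝ) 1 zero_le_one
            (2 * f a y / ((l.map (f · y)).sum + f a y)), glueSections f s h r₀ l y) : I × R))
          (g := h a) ((hc a).continuousAt (hopen.mem_nhds ?_)) (ht.prodMk hcx)
        show q _ ∈ V a
        rw [hqx]
        exact hxV
    · have hev : glueSections f s h r₀ (a :: l) =ᶠ[𝓝 x] glueSections f s h r₀ l := by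
        filter_upwards [notMem_tsupport_iff_eventuallyEq.1 hxa] with y hy
        exact glueSections_cons_of_eq_zero hf h0 hy
      have hxa0 : f a x = 0 := image_eq_zero_of_notMem_tsupport hxa
      obtain ⟨hcx, hqx⟩ := ih x (by linarith)
      exact ⟨hcx.congr hev.symm, hev.eq_of_nhds ▸ hqx⟩

/-- A map which over each member `V a` of a numerable cover has a section `s a` and a fiberwise
contraction `h a` onto the image of that section has a global section. -/
theorem exists_section_of_locally_shrinkable (q : R → X) (V : ι → Set X)
    (hV : ∀ a, IsOpen (V a))
    (hq : Continuous q) (hf : ∀ a x, 0 ≤ f a x) (hfc : ∀ a, Continuous (f a))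
    (hfl : LocallyFinite fun a => Function.support (f a)) (hf1 : ∀ x, ∃ a, 0 < f a x)
    (hfV : ∀ a, tsupport (f a) ⊆ V a)
    (hs : ∀ a, ContinuousOn (s a) (V a)) (hqs : ∀ a, ∀ x ∈ V a, q (s a x) = x)
    (hc : ∀ a, ContinuousOn (h a) {z | q z.2 ∈ V a}) (h0 : ∀ a r, h a (0, r) = r)
    (h1 : ∀ a r, q r ∈ V a → h a (1, r) = s a (q r))
    (hqh : ∀ a t r, q (h a (t, r)) = q r) :
    ∃ g : X → R, Continuous g ∧ ∀ x, q (g x) = x := by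
  classical
  rcases isEmpty_or_nonempty X with hX | ⟨⟨x₀⟩⟩
  · exact ⟨fun x => hX.elim x, continuous_of_const fun x => hX.elim x, fun x => hX.elim x⟩
  obtain ⟨a₀, -⟩ := hf1 x₀
  let r₀ := s a₀ x₀
  -- The order in which the members of the cover are entered must not depend on the point.
  let _ : LinearOrder ι := linearOrderOfSTO WellOrderingRel
  let S : X → Finset ι := fun x => (hfl.point_finite x).toFinset
  have hS : ∀ x a, a ∈ S x ↔ f a x ≠ 0 := by simp [S]
  have hfilter : ∀ (F : Finset ι) (x : X), S x ⊆ F →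
      (F.sort).filter (fun a => f a x ≠ 0) = (S x).sort := by
    intro F x hF
    refine List.Perm.eq_of_pairwise' (r := (· ≤ ·)) ((Finset.pairwise_sort F _).filter _)
      (Finset.pairwise_sort _ _) ?_
    rw [List.perm_ext_iff_of_nodup ((Finset.sort_nodup F _).filter _) (Finset.sort_nodup _ _)]
    intro a
    have := @hF a
    simp only [List.mem_filter, Finset.mem_sort, hS] at this ⊢
    grind
  have key : ∀ (F : Finset ι) (x : X), S x ⊆ F →
      ((S x).sort.map (f · x)).sum = (F.sort.map (f · x)).sum ∧
      glueSections f s h r₀ (S x).sort x = glueSections f s h r₀ F.sort x := by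
    intro F x hF
    rw [← hfilter F x hF]
    exact glueSections_filter hf h0 x _ _ (by simp)
  have hpos : ∀ x, 0 < ((S x).sort.map (f · x)).sum := by
    intro x
    obtain ⟨a, ha⟩ := hf1 x
    refine lt_of_lt_of_le ha (List.single_le_sum (by simpa using fun a _ => hf a x) _ ?_)
    exact List.mem_map.2 ⟨a, by simp [hS, ha.ne'], rfl⟩
  have hsec := glueSections_isSection (r₀ := r₀) q V hV hq hf hfc hfV hs hqs hc h0 h1 hqh
  refine ⟨fun x => glueSections f s h r₀ (S x).sort x, ?_, fun x => (hsec _ x (hpos x)).2⟩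
  rw [continuous_iff_continuousAt]
  intro x
  obtain ⟨N, hN, hfin⟩ := hfl x
  have hsub : ∀ y ∈ N, S y ⊆ hfin.toFinset := by
    intro y hy a ha
    rw [Finite.mem_toFinset]
    exact ⟨y, (hS y a).1 ha, hy⟩
  have hx := key _ x (hsub x (mem_of_mem_nhds hN))
  refine (hsec hfin.toFinset.sort x (hx.1 ▸ hpos x)).1.congr ?_
  filter_upwards [hN] with y hy
  exact (key _ y (hsub y hy)).2.symm

end Gluing

/-! ### Homotopies over a base -/

section FiberHomotopy

variable {W X Y Z B : Type*} [TopologicalSpace W] [TopologicalSpace X] [TopologicalSpace Y]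
  [TopologicalSpace Z]

/-- `f` and `g` are homotopic through maps over `B`. -/
def FibHtpy (pX : X → B) (pY : Y → B) (f g : C(X, Y)) : Prop :=
  ContinuousMap.HomotopicWith f g fun k => ∀ x, pY (k x) = pX x

variable {pW : W → B} {pX : X → B} {pY : Y → B} {pZ : Z → B} {f g k : C(X, Y)}

lemma FibHtpy.of_homotopy (H : I × X → Y) (hc : Continuous H) (h0 : ∀ x, H (0, x) = f x)
    (h1 : ∀ x, H (1, x) = g x) (hp : ∀ t x, pY (H (t, x)) = pX x) : FibHtpy pX pY f g :=
  ⟨{ toFun := H, continuous_toFun := hc, map_zero_left := h0, map_one_left := h1, prop' := hp }⟩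

lemma FibHtpy.exists_homotopy (h : FibHtpy pX pY f g) :
    ∃ H : I × X → Y, Continuous H ∧ (∀ x, H (0, x) = f x) ∧ (∀ x, H (1, x) = g x) ∧
      ∀ t x, pY (H (t, x)) = pX x := by
  obtain ⟨H⟩ := h
  exact ⟨H, H.continuous, H.apply_zero, H.apply_one, fun t x => H.prop t x⟩

lemma FibHtpy.symm (h : FibHtpy pX pY f g) : FibHtpy pX pY g f :=
  ContinuousMap.HomotopicWith.symm h

lemma FibHtpy.trans (h : FibHtpy pX pY f g) (h' : FibHtpy pX pY g k) : FibHtpy pX pY f k :=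
  ContinuousMap.HomotopicWith.trans h h'

lemma FibHtpy.postcomp (h : FibHtpy pX pY f g) (k : C(Y, Z)) (hk : ∀ y, pZ (k y) = pY y) :
    FibHtpy pX pZ (k.comp f) (k.comp g) := by
  obtain ⟨H, hc, h0, h1, hp⟩ := h.exists_homotopy
  exact .of_homotopy (k ∘ H) (k.continuous.comp hc) (by simp [h0]) (by simp [h1])
    (by simp [hk, hp])

lemma FibHtpy.precomp (h : FibHtpy pX pY f g) (k : C(W, X)) (hk : ∀ w, pX (k w) = pW w) :
    FibHtpy pW pY (f.comp k) (g.comp k) := by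
  obtain ⟨H, hc, h0, h1, hp⟩ := h.exists_homotopy
  exact .of_homotopy (fun z => H (z.1, k z.2)) (by fun_prop) (by simp [h0]) (by simp [h1])
    (by simp [hk, hp])

end FiberHomotopy

lemma isFiberHomotopyEquivOver_iff {X Y B : Type u} [TopologicalSpace X] [TopologicalSpace Y]
    [TopologicalSpace B] {pX : X → B} {pY : Y → B} (φ : C(X, Y)) :
    IsFiberHomotopyEquivOver pX pY φ ↔ (∀ x, pY (φ x) = pX x) ∧
      ∃ ψ : C(Y, X), (∀ y, pX (ψ y) = pY y) ∧ FibHtpy pX pX (ψ.comp φ) (.id X) ∧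
        FibHtpy pY pY (φ.comp ψ) (.id Y) := by
  constructor
  · rintro ⟨-, hφ, ψ, hψc, hψ, ⟨H, hH, H0, H1, Hp⟩, K, hK, K0, K1, Kp⟩
    exact ⟨hφ, ⟨ψ, hψc⟩, hψ, .of_homotopy H hH H0 H1 Hp, .of_homotopy K hK K0 K1 Kp⟩
  · rintro ⟨hφ, ψ, hψ, hH, hK⟩
    exact ⟨φ.continuous, hφ, ψ, ψ.continuous, hψ, hH.exists_homotopy, hK.exists_homotopy⟩

/-! ### The fiberwise mapping path space -/

section VertPath

variable {E E' B Z : Type*} [TopologicalSpace E] [TopologicalSpace E'] [TopologicalSpace Z]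

/-- The fiberwise mapping path space of a map `φ` over `B`: pairs of a point `e` of `E` and a path
in `E'` which starts at `φ e` and stays in the fiber of `e`. -/
def VertPath (p : E → B) (p' : E' → B) (φ : C(E, E')) : Type _ :=
  {r : E × C(I, E') // r.2 0 = φ r.1 ∧ ∀ t, p' (r.2 t) = p r.1}

namespace VertPath

variable {p : E → B} {p' : E' → B} {φ : C(E, E')}

instance : TopologicalSpace (VertPath p p' φ) :=
  inferInstanceAs (TopologicalSpace {r : E × C(I, E') // r.2 0 = φ r.1 ∧ ∀ t, p' (r.2 t) = p r.1})

/-- The point of `E` over which a vertical path starts. -/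
def pt (r : VertPath p p' φ) : E := r.1.1

/-- The underlying path in `E'`. -/
def path (r : VertPath p p' φ) : C(I, E') := r.1.2

lemma path_zero (r : VertPath p p' φ) : r.path 0 = φ r.pt := r.2.1

lemma proj_path (r : VertPath p p' φ) (t : I) : p' (r.path t) = p r.pt := r.2.2 t

@[ext]
lemma ext {r r' : VertPath p p' φ} (h : r.pt = r'.pt) (h' : ∀ t, r.path t = r'.path t) :
    r = r' :=
  Subtype.ext (Prod.ext h (ContinuousMap.ext h'))

@[fun_prop]
lemma continuous_pt : Continuous (pt : VertPath p p' φ → E) :=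
  continuous_fst.comp continuous_subtype_val

@[fun_prop]
lemma continuous_path : Continuous (path : VertPath p p' φ → C(I, E')) :=
  continuous_snd.comp continuous_subtype_val

lemma continuous_of_uncurry {g : Z → VertPath p p' φ} (h : Continuous fun z => (g z).pt)
    (h' : Continuous fun z : Z × I => (g z.1).path z.2) : Continuous g :=
  Continuous.subtype_mk (h.prodMk (ContinuousMap.continuous_of_continuous_uncurry _ h')) _

/-- The endpoint projection, the fibration which replaces `φ`. -/
def endpt (p : E → B) (p' : E' → B) (φ : C(E, E')) : C(VertPath p p' φ, E') :=
  ⟨fun r => r.path 1, by fun_prop⟩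

/-- The projection to `E`, as a continuous map. -/
def start (p : E → B) (p' : E' → B) (φ : C(E, E')) : C(VertPath p p' φ, E) :=
  ⟨pt, continuous_pt⟩

/-- Constant paths, the homotopy inverse of `start`. -/
def const (hφ : ∀ e, p' (φ e) = p e) : C(E, VertPath p p' φ) where
  toFun e := ⟨(e, .const I (φ e)), rfl, fun _ => hφ e⟩
  continuous_toFun := continuous_of_uncurry (by exact continuous_id)
    (show Continuous fun z : E × I => φ z.1 by fun_prop)

/-- Vertical paths shrink to their starting points. -/
lemma const_comp_start (hφ : ∀ e, p' (φ e) = p e) :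
    FibHtpy (fun r : VertPath p p' φ => p r.pt) (fun r => p r.pt)
      ((const hφ).comp (start p p' φ)) (.id _) := by
  refine .of_homotopy (fun z => ⟨(z.2.pt, ⟨fun t => z.2.path (z.1 * t), by fun_prop⟩), ?_, ?_⟩)
    (continuous_of_uncurry ?_ ?_) ?_ ?_ ?_
  · simp [path_zero]
  · simp [proj_path]
  · change Continuous fun z : I × VertPath p p' φ => z.2.pt
    fun_prop
  · change Continuous fun z : (I × VertPath p p' φ) × I => z.1.2.path (z.1.1 * z.2)
    fun_prop
  · intro r
    ext t
    · rfl
    · change r.path (0 * t) = φ r.pt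
      rw [zero_mul, path_zero]
  · intro r
    ext t
    · rfl
    · change r.path (1 * t) = r.path t
      rw [one_mul]
  · intro t r
    rfl

/-- Extension of a vertical path by a further path `γ` in the same fiber. -/
noncomputable def concat (r : VertPath p p' φ) (γ : C(I, E')) (h0 : γ 0 = r.path 1)
    (hp : ∀ t, p' (γ t) = p r.pt) : VertPath p p' φ :=
  ⟨(r.pt, ⟨fun t => if (t : ℝ) ≤ 1 / 2 then r.path (projIcc 0 1 zero_le_one (2 * (t : ℝ)))
      else γ (projIcc 0 1 zero_le_one (2 * (t : ℝ) - 1)), by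
    refine Continuous.if_le (by fun_prop) (by fun_prop) (by fun_prop) (by fun_prop) ?_
    intro t ht
    rw [ht]
    norm_num [h0]⟩), by simp [path_zero], by
      intro t
      simp only [ContinuousMap.coe_mk]
      split_ifs
      · exact proj_path _ _
      · exact hp _⟩

variable {r : VertPath p p' φ} {γ : C(I, E')}

@[simp] lemma concat_pt (h0 : γ 0 = r.path 1) (hp : ∀ t, p' (γ t) = p r.pt) :
    (r.concat γ h0 hp).pt = r.pt := rfl

lemma concat_path (h0 : γ 0 = r.path 1) (hp : ∀ t, p' (γ t) = p r.pt) (t : I) :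
    (r.concat γ h0 hp).path t =
      if (t : ℝ) ≤ 1 / 2 then r.path (projIcc 0 1 zero_le_one (2 * (t : ℝ)))
      else γ (projIcc 0 1 zero_le_one (2 * (t : ℝ) - 1)) := rfl

lemma endpt_concat (h0 : γ 0 = r.path 1) (hp : ∀ t, p' (γ t) = p r.pt) :
    endpt p p' φ (r.concat γ h0 hp) = γ 1 := by
  change (r.concat γ h0 hp).path 1 = γ 1
  rw [concat_path]
  norm_num

lemma concat_congr {r' : VertPath p p' φ} {γ' : C(I, E')} (h0 : γ 0 = r.path 1)
    (hp : ∀ t, p' (γ t) = p r.pt) (h0' : γ' 0 = r'.path 1) (hp' : ∀ t, p' (γ' t) = p r'.pt)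
    (hr : r = r') (hγ : ∀ t, γ t = γ' t) : r.concat γ h0 hp = r'.concat γ' h0' hp' := by
  obtain rfl := ContinuousMap.ext hγ
  subst hr
  rfl

lemma continuous_concat {r : Z → VertPath p p' φ} {γ : Z → C(I, E')}
    (h0 : ∀ z, γ z 0 = (r z).path 1) (hp : ∀ z t, p' (γ z t) = p (r z).pt)
    (hr : Continuous r) (hγ : Continuous γ) :
    Continuous fun z => (r z).concat (γ z) (h0 z) (hp z) := by
  refine continuous_of_uncurry (by simp only [concat_pt]; fun_prop) ?_
  simp only [concat_path]
  refine Continuous.if_le (by fun_prop) (by fun_prop) (by fun_prop) (by fun_prop) ?_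
  intro z hz
  rw [hz]
  norm_num [h0]

/-- Extension by the constant path at the endpoint. -/
noncomputable def pad : C(VertPath p p' φ, VertPath p p' φ) :=
  ⟨fun r => r.concat (.const I (r.path 1)) rfl fun _ => r.proj_path 1,
    continuous_concat _ _ continuous_id
      (ContinuousMap.continuous_of_continuous_uncurry _
        (show Continuous fun z : VertPath p p' φ × I => z.1.path 1 by fun_prop))⟩

lemma pad_path (r : VertPath p p' φ) (t : I) : (pad r).path t =
    if (t : ℝ) ≤ 1 / 2 then r.path (projIcc 0 1 zero_le_one (2 * (t : ℝ))) else r.path 1 := rfl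

/-- Extension by constant paths is a reparametrization. -/
lemma pad_htpy : FibHtpy (endpt p p' φ) (endpt p p' φ) (.id _) pad := by
  refine .of_homotopy (fun z => ⟨(z.2.pt,
    ⟨fun t => z.2.path (projIcc 0 1 zero_le_one ((1 + z.1 : ℝ) * t)), by fun_prop⟩), ?_, ?_⟩)
    (continuous_of_uncurry ?_ ?_) ?_ ?_ ?_
  · simp [path_zero]
  · simp [proj_path]
  · change Continuous fun z : I × VertPath p p' φ => z.2.pt
    fun_prop
  · change Continuous fun z : (I × VertPath p p' φ) × I =>
      z.1.2.path (projIcc 0 1 zero_le_one ((1 + z.1.1 : ℝ) * z.2))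
    fun_prop
  · intro r
    ext t
    · rfl
    · change r.path (projIcc 0 1 zero_le_one ((1 + (0 : I) : ℝ) * t)) = r.path t
      simp
  · intro r
    ext t
    · rfl
    · change r.path (projIcc 0 1 zero_le_one ((1 + (1 : I) : ℝ) * t)) = (pad r).path t
      rw [pad_path]
      split_ifs with ht
      · norm_num
      · rw [projIcc_of_right_le]
        · rfl
        · norm_num
          linarith
  · intro t r
    change r.path (projIcc 0 1 zero_le_one ((1 + t : ℝ) * (1 : I))) = r.path 1
    rw [projIcc_of_right_le]
    · rfl
    · simpa using t.2.1

/-- A section `s` of the endpoint projection with `s ∘ endpt` homotopic to the identity over `B`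
is homotopic to it even over `E'`. A homotopy `D` over `B` moves the endpoint of `r` along a loop;
it is followed by its image under `s ∘ endpt` run backwards, which moves the endpoint back along
the same loop, and each intermediate vertical path is extended by the way back to `endpt r`. -/
lemma shrink_over_endpt {s : C(E', VertPath p p' φ)} (hs : ∀ y, endpt p p' φ (s y) = y)
    (hsp : ∀ y, p (s y).pt = p' y)
    (hD : FibHtpy (fun r : VertPath p p' φ => p r.pt) (fun r => p r.pt) (.id _)
      (s.comp (endpt p p' φ))) :
    FibHtpy (endpt p p' φ) (endpt p p' φ) (.id _) (s.comp (endpt p p' φ)) := by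
  obtain ⟨D, hDc, D0, D1, Dp⟩ := hD.exists_homotopy
  simp only [ContinuousMap.id_apply, ContinuousMap.comp_apply] at D0 D1
  -- The track of the endpoint back to its initial position.
  let γ : I × VertPath p p' φ → C(I, E') := fun z =>
    ⟨fun v => endpt p p' φ (D (z.1 * unitInterval.symm v, z.2)), by fun_prop⟩
  have hγ : ∀ z v, γ z v = endpt p p' φ (D (z.1 * unitInterval.symm v, z.2)) := fun _ _ => rfl
  have hγc : Continuous γ := ContinuousMap.continuous_of_continuous_uncurry _
    (show Continuous fun z : (I × VertPath p p' φ) × I =>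
      endpt p p' φ (D (z.1.1 * unitInterval.symm z.2, z.1.2)) by fun_prop)
  have hγp : ∀ z v, p' (γ z v) = p z.2.pt := fun z v => by
    rw [hγ, ← Dp (z.1 * unitInterval.symm v) z.2]
    exact proj_path _ _
  have hγ0 : ∀ z, γ z 0 = endpt p p' φ (D z) := fun z => by simp [hγ]
  have hγ1 : ∀ z, γ z 1 = endpt p p' φ z.2 := fun z => by simp [hγ, D0]
  have hsD : ∀ z, p (s (endpt p p' φ (D z))).pt = p z.2.pt := fun z => by
    rw [hsp]
    exact (proj_path _ _).trans (Dp z.1 z.2)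
  let T₁ : I × VertPath p p' φ → VertPath p p' φ := fun z =>
    (D z).concat (γ z) (hγ0 z) fun v => (hγp z v).trans (Dp z.1 z.2).symm
  let T₂ : I × VertPath p p' φ → VertPath p p' φ := fun z =>
    (s (endpt p p' φ (D z))).concat (γ z) ((hγ0 z).trans (hs _).symm) fun v =>
      (hγp z v).trans (hsD z).symm
  have hT₁ : Continuous T₁ := continuous_concat _ _ hDc hγc
  have hT₂ : Continuous T₂ := continuous_concat _ _ (by fun_prop) hγc
  let m : C(VertPath p p' φ, VertPath p p' φ) := ⟨fun r => T₁ (1, r), by fun_prop⟩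
  have h₁ : FibHtpy (endpt p p' φ) (endpt p p' φ) pad m := by
    refine .of_homotopy T₁ hT₁ (fun r => ?_) (fun r => rfl) fun t r => ?_
    · exact concat_congr _ _ rfl (fun _ => r.proj_path 1) (D0 r) fun v => by
        simp only [hγ, zero_mul, D0]
        rfl
    · exact (endpt_concat _ _).trans (hγ1 _)
  have h₂ : FibHtpy (endpt p p' φ) (endpt p p' φ) (pad.comp (s.comp (endpt p p' φ))) m := by
    refine .of_homotopy T₂ hT₂ (fun r => ?_) (fun r => ?_) fun t r => ?_
    · refine concat_congr _ _ rfl (fun _ => (s _).proj_path 1) (by rw [D0]; rfl) fun v => ?_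
      simp only [hγ, zero_mul, D0]
      exact (hs _).symm
    · exact concat_congr _ _ (hγ0 (1, r)) (fun v => (hγp (1, r) v).trans (Dp 1 r).symm)
        (by rw [D1, hs]) fun v => rfl
    · exact (endpt_concat _ _).trans (hγ1 _)
  have h₃ : FibHtpy (endpt p p' φ) (endpt p p' φ) (s.comp (endpt p p' φ))
      (pad.comp (s.comp (endpt p p' φ))) := pad_htpy.precomp (s.comp (endpt p p' φ)) fun r => hs _
  exact pad_htpy.trans (h₁.trans (h₂.symm.trans h₃.symm))

/-- The endpoint projection of a fiber homotopy equivalence is shrinkable. -/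
lemma exists_shrinking {ψ : C(E', E)} (hφ : ∀ e, p' (φ e) = p e) (hψ : ∀ y, p (ψ y) = p' y)
    (hH : FibHtpy p p (ψ.comp φ) (.id E)) (hK : FibHtpy p' p' (φ.comp ψ) (.id E')) :
    ∃ s : C(E', VertPath p p' φ), (∀ y, endpt p p' φ (s y) = y) ∧
      FibHtpy (endpt p p' φ) (endpt p p' φ) (.id _) (s.comp (endpt p p' φ)) := by
  obtain ⟨K, hKc, K0, K1, Kp⟩ := hK.exists_homotopy
  let s : C(E', VertPath p p' φ) :=
    ⟨fun y => ⟨(ψ y, ⟨fun t => K (t, y), by fun_prop⟩), K0 y, fun t => (Kp t y).trans (hψ y).symm⟩,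
      continuous_of_uncurry (show Continuous fun y => ψ y by fun_prop)
        (show Continuous fun z : E' × I => K (z.2, z.1) by fun_prop)⟩
  have hs : ∀ y, endpt p p' φ (s y) = y := K1
  refine ⟨s, hs, shrink_over_endpt hs hψ ?_⟩
  let pR : VertPath p p' φ → B := fun r => p r.pt
  have hq : ∀ r, p' (endpt p p' φ r) = pR r := fun r => r.proj_path 1
  have hA := const_comp_start hφ
  have h₁ : FibHtpy pR pR ((const hφ).comp ((ψ.comp φ).comp (start p p' φ)))
      ((const hφ).comp (start p p' φ)) :=
    (hH.precomp (start p p' φ) fun _ => rfl).postcomp (const hφ) fun _ => rfl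
  -- `φ` is the composition of `endpt` with the inclusion of the constant paths.
  have h₂ : FibHtpy pR pR ((const hφ).comp ((ψ.comp φ).comp (start p p' φ)))
      ((const hφ).comp (ψ.comp (endpt p p' φ))) :=
    hA.postcomp ((const hφ).comp (ψ.comp (endpt p p' φ))) fun r => (hψ _).trans (hq r)
  have h₃ : FibHtpy pR pR ((const hφ).comp (ψ.comp (endpt p p' φ)))
      (s.comp (endpt p p' φ)) :=
    hA.precomp (s.comp (endpt p p' φ)) fun r => (hψ _).trans (hq r)
  exact hA.symm.trans (h₁.symm.trans (h₂.trans h₃))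

end VertPath

end VertPath

/-! ### From local to global -/

section Local

variable {E E' B : Type u} [TopologicalSpace E] [TopologicalSpace E'] [TopologicalSpace B]
  {p : E → B} {p' : E' → B}

/-- The restriction of a map over `B` to a map over `U`. -/
def restrictOver (φ : C(E, E')) (hφ : ∀ e, p' (φ e) = p e) (U : Set B) :
    C(↥(p ⁻¹' U), ↥(p' ⁻¹' U)) where
  toFun e := ⟨φ (e : E), show φ (e : E) ∈ p' ⁻¹' U by
    rw [Set.mem_preimage, hφ]; exact e.2⟩
  continuous_toFun := by fun_prop

open VertPath

open Classical in
/-- Over a set `U` over which `φ` is a fiber homotopy equivalence, the endpoint projection of its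
mapping path space is shrinkable. The section is extended by an arbitrary constant, and the
shrinking by the identity, to functions on the whole spaces. -/
lemma exists_local_shrinking {φ : C(E, E')} (hφ : ∀ e, p' (φ e) = p e) (U : Set B)
    (hne : Nonempty E' → Nonempty (VertPath p p' φ))
    (hloc : IsFiberHomotopyEquivOver (fun e : ↥(p ⁻¹' U) => p (e : E))
      (fun e' : ↥(p' ⁻¹' U) => p' (e' : E')) (restrictOver φ hφ U)) :
    ∃ (s : E' → VertPath p p' φ) (h : I × VertPath p p' φ → VertPath p p' φ),
      ContinuousOn s (p' ⁻¹' U) ∧ (∀ x ∈ p' ⁻¹' U, endpt p p' φ (s x) = x) ∧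
      ContinuousOn h {z | endpt p p' φ z.2 ∈ p' ⁻¹' U} ∧ (∀ r, h (0, r) = r) ∧
      (∀ r, endpt p p' φ r ∈ p' ⁻¹' U → h (1, r) = s (endpt p p' φ r)) ∧
      ∀ t r, endpt p p' φ (h (t, r)) = endpt p p' φ r := by
  obtain ⟨hφU, ψ, hψ, hH, hK⟩ := (isFiberHomotopyEquivOver_iff _).1 hloc
  obtain ⟨s, hs, hh⟩ := exists_shrinking hφU hψ hH hK
  obtain ⟨h, hhc, h0, h1, hq⟩ := hh.exists_homotopy
  let R := VertPath p p' φ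
  let RU := VertPath (fun e : ↥(p ⁻¹' U) => p (e : E)) (fun e' : ↥(p' ⁻¹' U) => p' (e' : E'))
    (restrictOver φ hφ U)
  let V : Set R := {r | endpt p p' φ r ∈ p' ⁻¹' U}
  let inc : RU → R := fun r => ⟨(r.pt, ⟨fun t => r.path t, by fun_prop⟩),
    congrArg Subtype.val r.path_zero, fun t => r.proj_path t⟩
  have hinc : Continuous inc := continuous_of_uncurry
    (show Continuous fun r : RU => (r.pt : E) by fun_prop)
    (show Continuous fun z : RU × I => (z.1.path z.2 : E') by fun_prop)
  -- A vertical path with endpoint over `U` lies over `U`.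
  have hpV : ∀ r : V, p r.1.pt ∈ U := fun r => by
    rw [← r.1.proj_path 1]
    exact r.2
  have hpV' : ∀ (r : V) (t : I), r.1.path t ∈ p' ⁻¹' U := fun r t =>
    (congrArg (· ∈ U) (r.1.proj_path t)).mpr (hpV r)
  let cod : V → RU := fun r => ⟨(⟨r.1.pt, hpV r⟩,
    ⟨fun t => ⟨r.1.path t, hpV' r t⟩, by fun_prop⟩),
    Subtype.ext r.1.path_zero, fun t => r.1.proj_path t⟩
  have hcod : Continuous cod := continuous_of_uncurry
    (show Continuous fun r : V => (⟨r.1.pt, hpV r⟩ : ↥(p ⁻¹' U)) by fun_prop)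
    (show Continuous fun z : V × I => (⟨z.1.1.path z.2, hpV' z.1 z.2⟩ : ↥(p' ⁻¹' U)) by fun_prop)
  have hic : ∀ r, inc (cod r) = r.1 := fun r => rfl
  have hec : ∀ r : V, endpt _ _ _ (cod r) = ⟨endpt p p' φ r.1, r.2⟩ := fun r => rfl
  have hei : ∀ r : RU, endpt p p' φ (inc r) = (endpt _ _ _ r : ↥(p' ⁻¹' U)) := fun r => rfl
  refine ⟨fun x => if hx : x ∈ p' ⁻¹' U then inc (s ⟨x, hx⟩) else (hne ⟨x⟩).some,
    fun z => if hz : z.2 ∈ V then inc (h (z.1, cod ⟨z.2, hz⟩)) else z.2, ?_, ?_, ?_, ?_, ?_, ?_⟩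
  · rw [continuousOn_iff_continuous_domRestrict]
    refine (hinc.comp s.continuous).congr fun x => ?_
    simp only [Set.domRestrict_apply, dif_pos x.2]
    rfl
  · intro x hx
    simp only [dif_pos hx, hei, hs]
  · rw [continuousOn_iff_continuous_domRestrict]
    have : Continuous fun z : {z : I × R | endpt p p' φ z.2 ∈ p' ⁻¹' U} =>
        inc (h (z.1.1, cod ⟨z.1.2, z.2⟩)) :=
      hinc.comp (hhc.comp ((by fun_prop : Continuous fun z :
        {z : I × R | endpt p p' φ z.2 ∈ p' ⁻¹' U} => z.1.1).prodMk (hcod.comp (by fun_prop))))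
    refine this.congr fun z => ?_
    have hz : z.1.2 ∈ V := z.2
    simp only [Set.domRestrict_apply, dif_pos hz]
  · intro r
    by_cases hr : r ∈ V
    · simp only [dif_pos hr, h0]
      rfl
    · simp only [dif_neg hr]
  · intro r hr
    have hr' : r ∈ V := hr
    simp only [dif_pos hr', dif_pos hr, h1]
    rfl
  · intro t r
    by_cases hr : r ∈ V
    · simp only [dif_pos hr, hei, hq, hec]
    · simp only [dif_neg hr]

/-- A map over `B` which is locally a fiber homotopy equivalence has a right inverse up to
homotopy over `B`, namely a section of the endpoint projection of its mapping path space. -/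
lemma exists_rightInverse (hp' : Continuous p') {φ : C(E, E')} (hφ : ∀ e, p' (φ e) = p e)
    {ι : Type*} {U : ι → Set B} (hU : ∀ α, IsOpen (U α))
    (pou : PartitionOfUnity ι B Set.univ) (hpou : pou.IsSubordinate U)
    (hloc : ∀ α, IsFiberHomotopyEquivOver (fun e : ↥(p ⁻¹' U α) => p (e : E))
      (fun e' : ↥(p' ⁻¹' U α) => p' (e' : E')) (restrictOver φ hφ (U α))) :
    ∃ ψ : C(E', E), (∀ y, p (ψ y) = p' y) ∧ FibHtpy p' p' (φ.comp ψ) (.id E') := by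
  have hne : Nonempty E' → Nonempty (VertPath p p' φ) := by
    rintro ⟨y⟩
    obtain ⟨α, hα⟩ := pou.exists_pos (mem_univ (p' y))
    obtain ⟨-, ψ, -⟩ := (isFiberHomotopyEquivOver_iff _).1 (hloc α)
    exact ⟨VertPath.const hφ (ψ ⟨y, hpou α (subset_tsupport _ hα.ne')⟩).1⟩
  choose s h hs hqs hh h0 h1 hqh using
    fun α => exists_local_shrinking hφ (U α) hne (hloc α)
  obtain ⟨g, hg, hqg⟩ := exists_section_of_locally_shrinkable (f := fun α y => pou α (p' y))
    (s := s) (h := h) (endpt p p' φ) (fun α => p' ⁻¹' U α) (fun α => (hU α).preimage hp')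
    (endpt p p' φ).continuous (fun α y => pou.nonneg α _) (fun α => by fun_prop)
    (pou.locallyFinite.preimage_continuous hp') (fun y => pou.exists_pos (mem_univ _))
    (fun α => (hp'.closure_preimage_subset _).trans (preimage_mono (hpou α)))
    hs hqs hh h0 h1 hqh
  have hgp : ∀ y, p (g y).pt = p' y := fun y => by
    rw [← (g y).proj_path 1]
    exact congrArg p' (hqg y)
  exact ⟨⟨fun y => (g y).pt, by fun_prop⟩, hgp,
    .of_homotopy (fun z => (g z.2).path z.1) (by fun_prop) (fun y => (g y).path_zero) hqg
      fun t y => ((g y).proj_path t).trans (hgp y)⟩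

end Local

/-- If `φ : E → E'` is a map over `B` and `{U α}` is a numerable open cover of `B` such
that each restriction `p⁻¹(U α) → p'⁻¹(U α)` of `φ` is a fiber homotopy equivalence over
`U α`, then `φ` is a fiber homotopy equivalence over `B`. -/
theorem fiber_homotopy_equiv_of_locally_fiber_homotopy_equiv
    {E E' B : Type u} [TopologicalSpace E] [TopologicalSpace E'] [TopologicalSpace B]
    (p : E → B) (p' : E' → B) (hp : Continuous p) (hp' : Continuous p')
    (φ : E → E') (hφc : Continuous φ) (hφ : ∀ e, p' (φ e) = p e)
    {ι : Type u} (U : ι → Set B)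
    (hUopen : ∀ α, IsOpen (U α)) (hUcover : ⋃ α, U α = Set.univ)
    (hnumerable : ∃ pou : PartitionOfUnity ι B Set.univ, pou.IsSubordinate U)
    (hloc : ∀ α, IsFiberHomotopyEquivOver
      (fun e : ↥(p ⁻¹' U α) => p (e : E))
      (fun e' : ↥(p' ⁻¹' U α) => p' (e' : E'))
      (fun e : ↥(p ⁻¹' U α) =>
        (⟨φ (e : E), show φ (e : E) ∈ p' ⁻¹' U α by
            rw [Set.mem_preimage, hφ]; exact e.2⟩ : ↥(p' ⁻¹' U α)))) :
    IsFiberHomotopyEquivOver p p' φ := by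
  obtain ⟨pou, hpou⟩ := hnumerable
  let Φ : C(E, E') := ⟨φ, hφc⟩
  obtain ⟨ψ, hψ, hK⟩ := exists_rightInverse (φ := Φ) hp' hφ hUopen pou hpou hloc
  -- Over each `U α` the right inverse `ψ` agrees up to homotopy with the local inverse `ψ'` of `φ`,
  -- so it is an equivalence there and has a right inverse `χ` in turn.
  have hlocψ : ∀ α, IsFiberHomotopyEquivOver (fun e' : ↥(p' ⁻¹' U α) => p' (e' : E'))
      (fun e : ↥(p ⁻¹' U α) => p (e : E)) (restrictOver ψ hψ (U α)) := by
    intro α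
    obtain ⟨-, ψ', hψ', hH', -⟩ :=
      (isFiberHomotopyEquivOver_iff (restrictOver Φ hφ (U α))).1 (hloc α)
    let ψU := restrictOver ψ hψ (U α)
    let ΦU := restrictOver Φ hφ (U α)
    let pU : ↥(p ⁻¹' U α) → B := fun e => p e
    let pU' : ↥(p' ⁻¹' U α) → B := fun e' => p' e'
    have hKU : FibHtpy pU' pU' (ΦU.comp ψU) (.id _) := by
      obtain ⟨K, hKc, K0, K1, Kp⟩ := hK.exists_homotopy
      exact .of_homotopy (fun z => ⟨K (z.1, z.2.1), by rw [mem_preimage, Kp]; exact z.2.2⟩)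
        (by fun_prop) (fun y => Subtype.ext (K0 y)) (fun y => Subtype.ext (K1 y))
        fun t y => Kp t y
    have hψψ' : FibHtpy pU' pU ψU ψ' :=
      ((hH'.precomp ψU fun y => hψ y).symm).trans (hKU.postcomp ψ' hψ')
    refine (isFiberHomotopyEquivOver_iff ψU).2 ⟨fun y => hψ y, ΦU, fun e => hφ e, hKU, ?_⟩
    exact (hψψ'.precomp ΦU fun e => hφ e).trans hH'
  obtain ⟨χ, hχ, hL⟩ := exists_rightInverse hp hψ hUopen pou hpou hlocψ
  have hφχ : FibHtpy p p' Φ χ :=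
    ((hL.postcomp Φ hφ).symm).trans (hK.precomp χ hχ)
  exact (isFiberHomotopyEquivOver_iff Φ).2 ⟨hφ, ψ, hψ, (hφχ.postcomp ψ hψ).trans hL, hK⟩
end
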